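/- Σ over integers l, m, n ≥ 1 with l + 2m + 3n ≡ 2 (mod 4) of 1 / (l² m² n² (l+m)² (m+n)² (l+m+n)²) = 1103·π¹² / 145332633600. -/

import Mathlib

open Real

noncomputable section PU4

lemma hs_conv {ι : Type} {f g : ι → ℂ} {a b : ℂ} (h : HasSum f a) (hf : ∀ i, g i = f i)
    (hab : b = a) : HasSum g b := by
  have : g = f := funext hf
  rw [this, hab]; exact h

/-- periodic zeta value -/
def cc (b : ℂ) (j : ℕ) : ℂ := ∑' n : ℤ, b ^ n * ((n : ℂ)⁻¹) ^ j

lemma inv_int_le (n : ℤ) : ‖((n : ℂ)⁻¹)‖ ≤ 1 := by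
  rcases eq_or_ne n 0 with rfl | h
  · simp
  · rw [norm_inv]
    apply inv_le_one_of_one_le₀
    rw [Complex.norm_intCast]
    exact_mod_cast Int.one_le_abs h

lemma summable_sq : Summable (fun n : ℤ => ‖((n : ℂ)⁻¹)‖ ^ 2) := by
  have := (Real.summable_one_div_int_pow (p := 2)).2 (by norm_num)
  refine this.congr fun n => ?_
  rw [norm_inv, Complex.norm_intCast]
  simp

lemma pow_le_sq {a : ℝ} (h0 : 0 ≤ a) (h1 : a ≤ 1) {j : ℕ} (hj : 2 ≤ j) : a ^ j ≤ a ^ 2 :=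
  pow_le_pow_of_le_one h0 h1 hj

lemma norm_zp {b : ℂ} (hb : ‖b‖ = 1) (n : ℤ) : ‖b ^ n‖ = 1 := by simp [norm_zpow, hb]

lemma ne_of_norm {b : ℂ} (hb : ‖b‖ = 1) : b ≠ 0 := by rintro rfl; simp at hb

lemma hasSum_cc {b : ℂ} (hb : ‖b‖ = 1) {j : ℕ} (hj : 2 ≤ j) :
    HasSum (fun n : ℤ => b ^ n * ((n : ℂ)⁻¹) ^ j) (cc b j) := by
  apply Summable.hasSum
  refine Summable.of_norm_bounded summable_sq fun n => ?_
  rw [norm_mul, norm_zp hb, one_mul, norm_pow]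
  exact pow_le_sq (norm_nonneg _) (inv_int_le n) hj

lemma hasSum_shift2 {b : ℂ} (hb : ‖b‖ = 1) (x : ℤ) :
    HasSum (fun z : ℤ => b ^ z * (((z : ℂ) - x)⁻¹) ^ 2) (b ^ x * cc b 2) := by
  have h := (hasSum_cc hb (j := 2) le_rfl).mul_left (b ^ x)
  rw [← (Equiv.subRight x).hasSum_iff] at h
  refine hs_conv h (fun z => ?_) rfl
  have : b ^ z = b ^ x * b ^ (z - x) := by
    rw [← zpow_add₀ (ne_of_norm hb)]; congr 1; ring
  simp [this, mul_assoc]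

/-- first-order datum -/
def D1 (b d : ℂ) : Prop :=
  HasSum (fun z : ℤ => b ^ z * (((z : ℂ) - 1)⁻¹ - (z : ℂ)⁻¹)) (d * (b - 1))

lemma hasSum_step {b d : ℂ} (hb : ‖b‖ = 1) (hd : D1 b d) (x : ℤ) :
    HasSum (fun z : ℤ => b ^ z * (((z : ℂ) - (x + 1 : ℤ))⁻¹ - ((z : ℂ) - x)⁻¹))
      (d * (b ^ (x + 1) - b ^ x)) := by
  have h := HasSum.mul_left (b ^ x) hd
  rw [← (Equiv.subRight x).hasSum_iff] at h
  have e : b ^ x * (d * (b - 1)) = d * (b ^ (x + 1) - b ^ x) := by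
    rw [zpow_add₀ (ne_of_norm hb), zpow_one]; ring
  rw [e] at h
  refine hs_conv h (fun z => ?_) rfl
  have : b ^ z = b ^ x * b ^ (z - x) := by
    rw [← zpow_add₀ (ne_of_norm hb)]; congr 1; ring
  simp [this, mul_assoc, sub_sub]

lemma hasSum_D {b d : ℂ} (hb : ‖b‖ = 1) (hd : D1 b d) (x : ℤ) :
    HasSum (fun z : ℤ => b ^ z * (((z : ℂ) - x)⁻¹ - (z : ℂ)⁻¹)) (d * (b ^ x - 1)) := by
  induction x using Int.induction_on with
  | zero => simp
  | succ i ih =>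
    refine hs_conv (ih.add (hasSum_step hb hd i)) (fun z => ?_) ?_
    · push_cast; ring
    · ring
  | pred i ih =>
    refine hs_conv (ih.sub (hasSum_step hb hd (-i - 1))) (fun z => ?_) ?_
    · push_cast; ring_nf
    · ring_nf

lemma inner4 {b d : ℂ} (hb : ‖b‖ = 1) (hd : D1 b d) (x : ℤ) (hx : x ≠ 0) :
    HasSum (fun y : ℤ => b ^ y * ((y : ℂ)⁻¹) ^ 4 * (((x : ℂ) - y)⁻¹) ^ 2)
      (cc b 4 * (x : ℂ)⁻¹ ^ 2 + 2 * cc b 3 * (x : ℂ)⁻¹ ^ 3 + 3 * cc b 2 * (x : ℂ)⁻¹ ^ 4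
        + 4 * d * (x : ℂ)⁻¹ ^ 5 - 10 * b ^ x * (x : ℂ)⁻¹ ^ 6 + b ^ x * cc b 2 * (x : ℂ)⁻¹ ^ 4
        - 4 * d * b ^ x * (x : ℂ)⁻¹ ^ 5 - 5 * (x : ℂ)⁻¹ ^ 6) := by
  have hx' : (x : ℂ) ≠ 0 := by exact_mod_cast hx
  have h := ((((((hasSum_cc hb (j := 4) (by norm_num)).mul_left ((x : ℂ)⁻¹ ^ 2)).add
    ((hasSum_cc hb (j := 3) (by norm_num)).mul_left (2 * (x : ℂ)⁻¹ ^ 3))).add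
    ((hasSum_cc hb (j := 2) (by norm_num)).mul_left (3 * (x : ℂ)⁻¹ ^ 4))).add
    ((hasSum_shift2 hb x).mul_left ((x : ℂ)⁻¹ ^ 4))).add
    ((hasSum_D hb hd x).mul_left (-4 * (x : ℂ)⁻¹ ^ 5))).sub
    ((hasSum_ite_eq (0 : ℤ) (5 * (x : ℂ)⁻¹ ^ 6)).add
    (hasSum_ite_eq x (10 * b ^ x * (x : ℂ)⁻¹ ^ 6)))
  refine hs_conv h (fun y => ?_) ?_
  · rcases eq_or_ne y 0 with rfl | hy
    · simp [hx.symm]; field_simp; ring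
    rcases eq_or_ne y x with rfl | hyx
    · simp [hx]; field_simp; ring
    have hy' : (y : ℂ) ≠ 0 := by exact_mod_cast hy
    have h1 : (y : ℂ) - x ≠ 0 := by
      rw [sub_ne_zero]; exact_mod_cast hyx
    have h2 : (x : ℂ) - y ≠ 0 := by
      rw [sub_ne_zero]; exact_mod_cast hyx.symm
    have h3 : ((x : ℂ) - y)⁻¹ ^ 2 = ((y : ℂ) - x)⁻¹ ^ 2 := by
      rw [← neg_sub (y : ℂ) x, inv_neg]; ring
    rw [h3]
    simp only [hy, hyx, if_false]
    field_simp
    ring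
  · ring

lemma inner5 {b d : ℂ} (hb : ‖b‖ = 1) (hd : D1 b d) (x : ℤ) (hx : x ≠ 0) :
    HasSum (fun y : ℤ => b ^ y * ((y : ℂ)⁻¹) ^ 5 * (((x : ℂ) - y)⁻¹) ^ 2)
      (cc b 5 * (x : ℂ)⁻¹ ^ 2 + 2 * cc b 4 * (x : ℂ)⁻¹ ^ 3 + 3 * cc b 3 * (x : ℂ)⁻¹ ^ 4
        + 4 * cc b 2 * (x : ℂ)⁻¹ ^ 5
        + 5 * d * (x : ℂ)⁻¹ ^ 6 - 15 * b ^ x * (x : ℂ)⁻¹ ^ 7 + b ^ x * cc b 2 * (x : ℂ)⁻¹ ^ 5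
        - 5 * d * b ^ x * (x : ℂ)⁻¹ ^ 6 - 6 * (x : ℂ)⁻¹ ^ 7) := by
  have hx' : (x : ℂ) ≠ 0 := by exact_mod_cast hx
  have h := (((((((hasSum_cc hb (j := 5) (by norm_num)).mul_left ((x : ℂ)⁻¹ ^ 2)).add
    ((hasSum_cc hb (j := 4) (by norm_num)).mul_left (2 * (x : ℂ)⁻¹ ^ 3))).add
    ((hasSum_cc hb (j := 3) (by norm_num)).mul_left (3 * (x : ℂ)⁻¹ ^ 4))).add
    ((hasSum_cc hb (j := 2) (by norm_num)).mul_left (4 * (x : ℂ)⁻¹ ^ 5))).add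
    ((hasSum_shift2 hb x).mul_left ((x : ℂ)⁻¹ ^ 5))).add
    ((hasSum_D hb hd x).mul_left (-5 * (x : ℂ)⁻¹ ^ 6))).sub
    ((hasSum_ite_eq (0 : ℤ) (6 * (x : ℂ)⁻¹ ^ 7)).add
    (hasSum_ite_eq x (15 * b ^ x * (x : ℂ)⁻¹ ^ 7)))
  refine hs_conv h (fun y => ?_) ?_
  · rcases eq_or_ne y 0 with rfl | hy
    · simp [hx.symm]; field_simp; ring
    rcases eq_or_ne y x with rfl | hyx
    · simp [hx]; field_simp; ring
    have hy' : (y : ℂ) ≠ 0 := by exact_mod_cast hy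
    have h1 : (y : ℂ) - x ≠ 0 := by
      rw [sub_ne_zero]; exact_mod_cast hyx
    have h3 : ((x : ℂ) - y)⁻¹ ^ 2 = ((y : ℂ) - x)⁻¹ ^ 2 := by
      rw [← neg_sub (y : ℂ) x, inv_neg]; ring
    rw [h3]
    simp only [hy, hyx, if_false]
    field_simp
    ring
  · ring

/-- double sums -/
def uf (p q : ℕ) (a b : ℂ) (t : ℤ × ℤ) : ℂ :=
  a ^ t.1 * b ^ t.2 * ((t.1 : ℂ)⁻¹) ^ p * ((t.2 : ℂ)⁻¹) ^ q * (((t.1 : ℂ) - t.2)⁻¹) ^ 2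

def UU (p q : ℕ) (a b : ℂ) : ℂ := ∑' t, uf p q a b t

lemma inv_sub_le (m n : ℤ) : ‖(((m : ℂ) - n)⁻¹)‖ ≤ 1 := by
  have := inv_int_le (m - n); push_cast at this; exact this

lemma summable_sq2 : Summable (fun t : ℤ × ℤ => ‖((t.1 : ℂ)⁻¹)‖ ^ 2 * ‖((t.2 : ℂ)⁻¹)‖ ^ 2) :=
  summable_sq.mul_of_nonneg summable_sq (fun _ => by positivity) (fun _ => by positivity)

lemma summable_uf {p q : ℕ} {a b : ℂ} (ha : ‖a‖ = 1) (hb : ‖b‖ = 1) (hp : 2 ≤ p) (hq : 2 ≤ q) :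
    Summable (uf p q a b) := by
  refine Summable.of_norm_bounded summable_sq2 fun t => ?_
  unfold uf
  simp only [norm_mul, norm_zp ha, norm_zp hb, one_mul, norm_pow]
  have h1 := pow_le_sq (norm_nonneg _) (inv_int_le t.1) hp
  have h2 := pow_le_sq (norm_nonneg _) (inv_int_le t.2) hq
  have h3 : ‖((t.1 : ℂ) - t.2)⁻¹‖ ^ 2 ≤ 1 := pow_le_one₀ (norm_nonneg _) (inv_sub_le _ _)
  calc _ ≤ ‖((t.1 : ℂ)⁻¹)‖ ^ 2 * ‖((t.2 : ℂ)⁻¹)‖ ^ 2 * 1 := by gcongr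
    _ = _ := mul_one _

lemma UU4 {p : ℕ} {a b d : ℂ} (ha : ‖a‖ = 1) (hb : ‖b‖ = 1) (hd : D1 b d) (hp : 2 ≤ p) :
    UU p 4 a b = cc b 4 * cc a (p + 2) + 2 * cc b 3 * cc a (p + 3) + 3 * cc b 2 * cc a (p + 4)
        + 4 * d * cc a (p + 5) - 10 * cc (a * b) (p + 6) + cc b 2 * cc (a * b) (p + 4)
        - 4 * d * cc (a * b) (p + 5) - 5 * cc a (p + 6) := by
  have hab : ‖a * b‖ = 1 := by simp [ha, hb]
  unfold UU
  rw [(summable_uf ha hb hp (by norm_num)).tsum_prod]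
  have h := ((((((((hasSum_cc ha (j := p + 2) (by omega)).mul_left (cc b 4)).add
    ((hasSum_cc ha (j := p + 3) (by omega)).mul_left (2 * cc b 3))).add
    ((hasSum_cc ha (j := p + 4) (by omega)).mul_left (3 * cc b 2))).add
    ((hasSum_cc ha (j := p + 5) (by omega)).mul_left (4 * d))).sub
    ((hasSum_cc hab (j := p + 6) (by omega)).mul_left 10)).add
    ((hasSum_cc hab (j := p + 4) (by omega)).mul_left (cc b 2))).sub
    ((hasSum_cc hab (j := p + 5) (by omega)).mul_left (4 * d))).sub
    ((hasSum_cc ha (j := p + 6) (by omega)).mul_left 5)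
  rw [← h.tsum_eq]
  congr 1
  ext x
  rcases eq_or_ne x 0 with rfl | hx
  · have : p ≠ 0 := by omega
    simp [uf, this]
  · have h2 := ((inner4 hb hd x hx).mul_left (a ^ x * (x : ℂ)⁻¹ ^ p)).tsum_eq
    rw [mul_zpow]
    convert h2 using 1
    · congr 1; ext y; simp only [uf]; ring
    · ring

lemma UU5 {p : ℕ} {a b d : ℂ} (ha : ‖a‖ = 1) (hb : ‖b‖ = 1) (hd : D1 b d) (hp : 2 ≤ p) :
    UU p 5 a b = cc b 5 * cc a (p + 2) + 2 * cc b 4 * cc a (p + 3) + 3 * cc b 3 * cc a (p + 4)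
        + 4 * cc b 2 * cc a (p + 5)
        + 5 * d * cc a (p + 6) - 15 * cc (a * b) (p + 7) + cc b 2 * cc (a * b) (p + 5)
        - 5 * d * cc (a * b) (p + 6) - 6 * cc a (p + 7) := by
  have hab : ‖a * b‖ = 1 := by simp [ha, hb]
  unfold UU
  rw [(summable_uf ha hb hp (by norm_num)).tsum_prod]
  have h := (((((((((hasSum_cc ha (j := p + 2) (by omega)).mul_left (cc b 5)).add
    ((hasSum_cc ha (j := p + 3) (by omega)).mul_left (2 * cc b 4))).add
    ((hasSum_cc ha (j := p + 4) (by omega)).mul_left (3 * cc b 3))).add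
    ((hasSum_cc ha (j := p + 5) (by omega)).mul_left (4 * cc b 2))).add
    ((hasSum_cc ha (j := p + 6) (by omega)).mul_left (5 * d))).sub
    ((hasSum_cc hab (j := p + 7) (by omega)).mul_left 15)).add
    ((hasSum_cc hab (j := p + 5) (by omega)).mul_left (cc b 2))).sub
    ((hasSum_cc hab (j := p + 6) (by omega)).mul_left (5 * d))).sub
    ((hasSum_cc ha (j := p + 7) (by omega)).mul_left 6)
  rw [← h.tsum_eq]
  congr 1
  ext x
  rcases eq_or_ne x 0 with rfl | hx
  · have : p ≠ 0 := by omega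
    simp [uf, this]
  · have h2 := ((inner5 hb hd x hx).mul_left (a ^ x * (x : ℂ)⁻¹ ^ p)).tsum_eq
    rw [mul_zpow]
    convert h2 using 1
    · congr 1; ext y; simp only [uf]; ring
    · ring

/-- residue term -/
def h0 (b d x y : ℂ) (u v : ℂ) : ℂ :=
  x⁻¹ ^ 2 * y⁻¹ ^ 2 * (cc b 2 - u * x⁻¹ ^ 2 - v * y⁻¹ ^ 2)
    + 2 * (x⁻¹ + y⁻¹) * x⁻¹ ^ 2 * y⁻¹ ^ 2 * (d - u * x⁻¹ - v * y⁻¹)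

lemma innerz {b d : ℂ} (hb : ‖b‖ = 1) (hd : D1 b d) (x y : ℤ) (hx : x ≠ 0) (hy : y ≠ 0)
    (hxy : x ≠ y) :
    HasSum (fun z : ℤ => b ^ z * ((z : ℂ)⁻¹) ^ 2 * (((x : ℂ) - z)⁻¹) ^ 2 * (((y : ℂ) - z)⁻¹) ^ 2)
      (h0 b d x y (b ^ x) (b ^ y) + b ^ x * h0 b d (-x) (y - x) (b ^ (-x)) (b ^ (y - x))
        + b ^ y * h0 b d (-y) (x - y) (b ^ (-y)) (b ^ (x - y))) := by
  have hb0 := ne_of_norm hb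
  have hx' : (x : ℂ) ≠ 0 := by exact_mod_cast hx
  have hy' : (y : ℂ) ≠ 0 := by exact_mod_cast hy
  have hD : (x : ℂ) - y ≠ 0 := by rw [sub_ne_zero]; exact_mod_cast hxy
  have hD' : ((y : ℂ) - x)⁻¹ = - ((x : ℂ) - y)⁻¹ := by
    rw [← neg_sub, inv_neg]
  set X := (x : ℂ)⁻¹ with hX
  set Y := (y : ℂ)⁻¹ with hY
  set D := ((x : ℂ) - y)⁻¹ with hDD
  have hrel : X * Y + D * X - D * Y = 0 := by
    rw [hX, hY, hDD]; field_simp; ring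
  have h := ((((((hasSum_cc hb (j := 2) (by norm_num)).mul_left (X ^ 2 * Y ^ 2)).add
    ((hasSum_shift2 hb x).mul_left (X ^ 2 * D ^ 2))).add
    ((hasSum_shift2 hb y).mul_left (Y ^ 2 * D ^ 2))).add
    ((hasSum_D hb hd x).mul_left (-2 * (X + D) * X ^ 2 * D ^ 2))).add
    ((hasSum_D hb hd y).mul_left (-2 * (Y - D) * Y ^ 2 * D ^ 2))).sub
    (((hasSum_ite_eq (0 : ℤ) (X ^ 4 * D ^ 2 + Y ^ 4 * D ^ 2 + 2 * (X + D) * X ^ 3 * D ^ 2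
      + 2 * (Y - D) * Y ^ 3 * D ^ 2)).add
    (hasSum_ite_eq x (b ^ x * (X ^ 4 * Y ^ 2 + Y ^ 2 * D ^ 4 + 2 * (X + D) * X ^ 3 * D ^ 2
      - 2 * (Y - D) * Y ^ 2 * D ^ 2 * (D - X))))).add
    (hasSum_ite_eq y (b ^ y * (X ^ 2 * Y ^ 4 + X ^ 2 * D ^ 4 + 2 * (X + D) * X ^ 2 * D ^ 2 * (D + Y)
      + 2 * (Y - D) * Y ^ 3 * D ^ 2))))
  refine hs_conv h (fun z => ?_) ?_
  · rcases eq_or_ne z 0 with rfl | hz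
    · simp [hx.symm, hy.symm, ← hX, ← hY]; ring
    have hz' : (z : ℂ) ≠ 0 := by exact_mod_cast hz
    rcases eq_or_ne z x with rfl | hzx
    · simp [hx, hxy, ← hX, ← hDD]; ring
    rcases eq_or_ne z y with rfl | hzy
    · simp [hy, hxy.symm, ← hY, hD']; ring
    have h1 : (z : ℂ) - x ≠ 0 := by
      rw [sub_ne_zero]; exact_mod_cast hzx
    have h2 : (z : ℂ) - y ≠ 0 := by
      rw [sub_ne_zero]; exact_mod_cast hzy
    have h3 : ((x : ℂ) - z)⁻¹ ^ 2 = ((z : ℂ) - x)⁻¹ ^ 2 := by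
      rw [← neg_sub (z : ℂ) x, inv_neg]; ring
    have h4 : ((y : ℂ) - z)⁻¹ ^ 2 = ((z : ℂ) - y)⁻¹ ^ 2 := by
      rw [← neg_sub (z : ℂ) y, inv_neg]; ring
    rw [h3, h4]
    simp only [hz, hzx, hzy, if_false]
    rw [hX, hY, hDD]
    field_simp
    ring
  · have e1 : b ^ (y - x) = b ^ y * b ^ (-x) := by rw [← zpow_add₀ hb0]; rfl
    have e2 : b ^ (x - y) = b ^ x * b ^ (-y) := by rw [← zpow_add₀ hb0]; rfl
    have e3 : b ^ x * b ^ (-x) = 1 := by rw [← zpow_add₀ hb0]; simp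
    have e4 : b ^ y * b ^ (-y) = 1 := by rw [← zpow_add₀ hb0]; simp
    simp only [h0, e1, e2, inv_neg, hD', ← hX, ← hY, ← hDD]
    generalize b ^ (-x) = u' at *
    generalize b ^ (-y) = v' at *
    have hu : u' = (b ^ x)⁻¹ := eq_inv_of_mul_eq_one_right e3
    have hv : v' = (b ^ y)⁻¹ := eq_inv_of_mul_eq_one_right e4
    have hu0 : b ^ x ≠ 0 := zpow_ne_zero _ hb0
    have hv0 : b ^ y ≠ 0 := zpow_ne_zero _ hb0
    generalize b ^ x = u at *
    generalize b ^ y = v at *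
    rw [hu, hv, hX, hY, hDD]
    field_simp
    ring

/-- triple sums -/
def sf (a : ℂ) (t : (ℤ × ℤ) × ℤ) : ℂ :=
  a ^ (t.1.1 + t.1.2 + t.2) * ((t.1.1 : ℂ)⁻¹ ^ 2 * (t.1.2 : ℂ)⁻¹ ^ 2 * (t.2 : ℂ)⁻¹ ^ 2 *
    ((t.1.1 : ℂ) - t.1.2)⁻¹ ^ 2 * ((t.1.1 : ℂ) - t.2)⁻¹ ^ 2 * ((t.1.2 : ℂ) - t.2)⁻¹ ^ 2)

def SS (a : ℂ) : ℂ := ∑' t, sf a t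

lemma summable_sq3 : Summable (fun t : (ℤ × ℤ) × ℤ =>
    (‖((t.1.1 : ℂ)⁻¹)‖ ^ 2 * ‖((t.1.2 : ℂ)⁻¹)‖ ^ 2) * ‖((t.2 : ℂ)⁻¹)‖ ^ 2) :=
  summable_sq2.mul_of_nonneg summable_sq (fun _ => by positivity) (fun _ => by positivity)

lemma summable_sf {a : ℂ} (ha : ‖a‖ = 1) : Summable (sf a) := by
  refine Summable.of_norm_bounded summable_sq3 fun t => ?_
  unfold sf
  simp only [norm_mul, norm_zp ha, one_mul, norm_pow]
  have h3 : ‖((t.1.1 : ℂ) - t.1.2)⁻¹‖ ^ 2 ≤ 1 := pow_le_one₀ (norm_nonneg _) (inv_sub_le _ _)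
  have h4 : ‖((t.1.1 : ℂ) - t.2)⁻¹‖ ^ 2 ≤ 1 := pow_le_one₀ (norm_nonneg _) (inv_sub_le _ _)
  have h5 : ‖((t.1.2 : ℂ) - t.2)⁻¹‖ ^ 2 ≤ 1 := pow_le_one₀ (norm_nonneg _) (inv_sub_le _ _)
  calc _ ≤ ‖((t.1.1 : ℂ)⁻¹)‖ ^ 2 * ‖((t.1.2 : ℂ)⁻¹)‖ ^ 2 * ‖((t.2 : ℂ)⁻¹)‖ ^ 2 * 1 * 1 * 1 := by
        gcongr
    _ = _ := by ring

def H0 (a d : ℂ) (t : ℤ × ℤ) : ℂ :=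
  a ^ (t.1 + t.2) * ((t.1 : ℂ)⁻¹ ^ 2 * (t.2 : ℂ)⁻¹ ^ 2 * ((t.1 : ℂ) - t.2)⁻¹ ^ 2) *
    h0 a d t.1 t.2 (a ^ t.1) (a ^ t.2)

def e1 : ℤ × ℤ ≃ ℤ × ℤ where
  toFun t := (-t.1, t.2 - t.1)
  invFun t := (-t.1, t.2 - t.1)
  left_inv t := by ext <;> simp
  right_inv t := by ext <;> simp

def e2 : ℤ × ℤ ≃ ℤ × ℤ where
  toFun t := (-t.2, t.1 - t.2)
  invFun t := (t.2 - t.1, -t.1)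
  left_inv t := by ext <;> simp
  right_inv t := by ext <;> simp

lemma hasSum_uf {p q : ℕ} {a b : ℂ} (ha : ‖a‖ = 1) (hb : ‖b‖ = 1) (hp : 2 ≤ p) (hq : 2 ≤ q) :
    HasSum (uf p q a b) (UU p q a b) := (summable_uf ha hb hp hq).hasSum

lemma hasSum_ufs {p q : ℕ} {a b : ℂ} (ha : ‖a‖ = 1) (hb : ‖b‖ = 1) (hp : 2 ≤ p) (hq : 2 ≤ q) :
    HasSum (fun t : ℤ × ℤ => uf p q a b t.swap) (UU p q a b) :=
  (Equiv.prodComm ℤ ℤ).hasSum_iff.2 (summable_uf ha hb hp hq).hasSum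

lemma hasSum_H0 {a d : ℂ} (ha : ‖a‖ = 1) :
    HasSum (H0 a d) (cc a 2 * UU 4 4 a a + 4 * d * UU 5 4 a a - 6 * UU 6 4 (a * a) a
      - 4 * UU 5 5 (a * a) a) := by
  have haa : ‖a * a‖ = 1 := by simp [ha]
  have h := ((((hasSum_uf ha ha (p := 4) (q := 4) (by norm_num) (by norm_num)).mul_left (cc a 2)).add
    (((hasSum_uf ha ha (p := 5) (q := 4) (by norm_num) (by norm_num)).add
      (hasSum_ufs ha ha (p := 5) (q := 4) (by norm_num) (by norm_num))).mul_left (2 * d))).sub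
    (((hasSum_uf haa ha (p := 6) (q := 4) (by norm_num) (by norm_num)).add
      (hasSum_ufs haa ha (p := 6) (q := 4) (by norm_num) (by norm_num))).mul_left 3)).sub
    (((hasSum_uf haa ha (p := 5) (q := 5) (by norm_num) (by norm_num)).add
      (hasSum_ufs haa ha (p := 5) (q := 5) (by norm_num) (by norm_num))).mul_left 2)
  refine hs_conv h (fun t => ?_) (by ring)
  obtain ⟨x, y⟩ := t
  have hs : ((y : ℂ) - x)⁻¹ ^ 2 = ((x : ℂ) - y)⁻¹ ^ 2 := by
    rw [← neg_sub (x : ℂ) y, inv_neg]; ring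
  simp only [H0, h0, uf, Prod.swap, zpow_add₀ (ne_of_norm ha), mul_zpow, hs]
  ring

lemma zp4 {a : ℂ} (ha : ‖a‖ = 1) (h4 : a ^ 4 = 1) {m n k : ℤ} (h : m = n + 4 * k) :
    a ^ m = a ^ n := by
  rw [h, zpow_add₀ (ne_of_norm ha), zpow_mul]
  have : a ^ (4 : ℤ) = 1 := by exact_mod_cast h4
  rw [this]; simp

lemma inner_sf {a d : ℂ} (ha : ‖a‖ = 1) (h4 : a ^ 4 = 1) (hd : D1 a d) (t : ℤ × ℤ) :
    ∑' z, sf a (t, z) = H0 a d t + H0 a d (e1 t) + H0 a d (e2 t) := by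
  obtain ⟨x, y⟩ := t
  have ha0 := ne_of_norm ha
  by_cases hdeg : x = 0 ∨ y = 0 ∨ x = y
  · rcases hdeg with rfl | rfl | rfl
    · simp [sf, H0, e1, e2]
    · simp [sf, H0, e1, e2]
    · simp [sf, H0, e1, e2]
  · push Not at hdeg
    obtain ⟨hx, hy, hxy⟩ := hdeg
    have h := ((innerz ha hd x y hx hy hxy).mul_left
      (a ^ (x + y) * ((x : ℂ)⁻¹ ^ 2 * (y : ℂ)⁻¹ ^ 2 * ((x : ℂ) - y)⁻¹ ^ 2))).tsum_eq
    have e : ∀ z, sf a ((x, y), z) = (a ^ (x + y) * ((x : ℂ)⁻¹ ^ 2 * (y : ℂ)⁻¹ ^ 2 *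
        ((x : ℂ) - y)⁻¹ ^ 2)) * (a ^ z * ((z : ℂ)⁻¹) ^ 2 * (((x : ℂ) - z)⁻¹) ^ 2 *
        (((y : ℂ) - z)⁻¹) ^ 2) := by
      intro z
      simp only [sf]
      rw [zpow_add₀ ha0 (x + y) z]
      ring
    simp only [e]
    rw [h]
    have hs : ((y : ℂ) - x)⁻¹ ^ 2 = ((x : ℂ) - y)⁻¹ ^ 2 := by
      rw [← neg_sub (x : ℂ) y, inv_neg]; ring
    have g1 : a ^ (-x + (y - x)) = a ^ (x + y) * a ^ x := by
      rw [← zpow_add₀ ha0]; exact zp4 ha h4 (k := -x) (by ring)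
    have g2 : a ^ (-y + (x - y)) = a ^ (x + y) * a ^ y := by
      rw [← zpow_add₀ ha0]; exact zp4 ha h4 (k := -y) (by ring)
    have k1 : (-(x : ℂ) - (y - x))⁻¹ ^ 2 = (y : ℂ)⁻¹ ^ 2 := by
      have : (-(x : ℂ) - (y - x)) = - y := by ring
      rw [this, inv_neg]; ring
    have k2 : (-(y : ℂ) - (x - y))⁻¹ ^ 2 = (x : ℂ)⁻¹ ^ 2 := by
      have : (-(y : ℂ) - (x - y)) = - x := by ring
      rw [this, inv_neg]; ring
    have k3 : (-(x : ℂ))⁻¹ ^ 2 = (x : ℂ)⁻¹ ^ 2 := by rw [inv_neg]; ring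
    have k4 : (-(y : ℂ))⁻¹ ^ 2 = (y : ℂ)⁻¹ ^ 2 := by rw [inv_neg]; ring
    simp only [H0, e1, e2, Equiv.coe_fn_mk, g1, g2, Int.cast_neg, Int.cast_sub, k1, k2, k3, k4, hs]
    ring

lemma SS_eq {a d : ℂ} (ha : ‖a‖ = 1) (h4 : a ^ 4 = 1) (hd : D1 a d) :
    SS a = 3 * (cc a 2 * UU 4 4 a a + 4 * d * UU 5 4 a a - 6 * UU 6 4 (a * a) a
      - 4 * UU 5 5 (a * a) a) := by
  unfold SS
  rw [(summable_sf ha).tsum_prod]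
  simp only [inner_sf ha h4 hd]
  have h := hasSum_H0 (d := d) ha
  have h1 := e1.hasSum_iff.2 h
  have h2 := e2.hasSum_iff.2 h
  have := ((h.add h1).add h2).tsum_eq
  simp only [Function.comp] at this
  rw [this]; ring

lemma D1_summable {b : ℂ} (hb : ‖b‖ = 1) :
    Summable (fun z : ℤ => b ^ z * (((z : ℂ) - 1)⁻¹ - (z : ℂ)⁻¹)) := by
  have h1 : Summable (fun z : ℤ => ‖((z : ℂ) - 1)⁻¹‖ ^ 2) := by
    have := (Equiv.subRight (1 : ℤ)).summable_iff.2 summable_sq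
    refine this.congr fun z => ?_
    simp only [Function.comp, Equiv.subRight_apply, Int.cast_sub, Int.cast_one]
  refine Summable.of_norm_bounded (summable_sq.add h1) fun z => ?_
  rw [norm_mul, norm_zp hb, one_mul]
  rcases eq_or_ne z 0 with rfl | hz
  · simp
  rcases eq_or_ne z 1 with rfl | hz1
  · simp
  have hz' : (z : ℂ) ≠ 0 := by exact_mod_cast hz
  have h2 : (z : ℂ) - 1 ≠ 0 := by rw [sub_ne_zero]; exact_mod_cast hz1
  have : ((z : ℂ) - 1)⁻¹ - (z : ℂ)⁻¹ = (z : ℂ)⁻¹ * ((z : ℂ) - 1)⁻¹ := by field_simp; ring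
  rw [this, norm_mul]
  nlinarith [sq_nonneg (‖(z : ℂ)⁻¹‖ - ‖((z : ℂ) - 1)⁻¹‖), sq_nonneg (‖(z : ℂ)⁻¹‖),
    sq_nonneg ‖((z : ℂ) - 1)⁻¹‖]

/-- symmetric partial sums -/
def EE (b : ℂ) (N : ℕ) : ℂ := ∑ n ∈ Finset.range N,
  ((b ^ (2 * n + 1 : ℤ) - b ^ (-(2 * n + 1) : ℤ)) * ((2 * n + 1 : ℂ))⁻¹ +
   (b ^ (2 * n + 2 : ℤ) - b ^ (-(2 * n + 2) : ℤ)) * ((2 * n + 2 : ℂ))⁻¹)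

lemma GG {b : ℂ} (hb : ‖b‖ = 1) (N : ℕ) :
    ∑ z ∈ Finset.Icc (-(2 * N) : ℤ) (2 * N), b ^ z * (((z : ℂ) - 1)⁻¹ - (z : ℂ)⁻¹) =
      (b - 1) * EE b N + (- b ^ (-(2 * N) : ℤ) * (2 * N + 1 : ℂ)⁻¹
        - b ^ (2 * N + 1 : ℤ) * (2 * N : ℂ)⁻¹) := by
  have hb0 := ne_of_norm hb
  induction N with
  | zero => simp [EE]
  | succ N ih =>
    have hset : Finset.Icc (-(2 * (N + 1 : ℕ)) : ℤ) (2 * (N + 1 : ℕ)) =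
        insert (-(2 * N + 2) : ℤ) (insert (-(2 * N + 1) : ℤ) (insert (2 * N + 2 : ℤ)
          (insert (2 * N + 1 : ℤ) (Finset.Icc (-(2 * N) : ℤ) (2 * N))))) := by
      ext z
      simp only [Finset.mem_Icc, Finset.mem_insert]
      push_cast
      omega
    have hE : EE b (N + 1) = EE b N +
      ((b ^ (2 * N + 1 : ℤ) - b ^ (-(2 * N + 1) : ℤ)) * ((2 * N + 1 : ℂ))⁻¹ +
       (b ^ (2 * N + 2 : ℤ) - b ^ (-(2 * N + 2) : ℤ)) * ((2 * N + 2 : ℂ))⁻¹) := by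
      unfold EE; rw [Finset.sum_range_succ]
    rw [hset, Finset.sum_insert, Finset.sum_insert, Finset.sum_insert, Finset.sum_insert, ih, hE]
    · push_cast
      have e1 : (-(2 * (N : ℂ) + 2) - 1) = -(2 * N + 3) := by ring
      have e2 : (-(2 * (N : ℂ) + 1) - 1) = -(2 * N + 2) := by ring
      have e3 : (2 * (N : ℂ) + 2 - 1) = (2 * N + 1) := by ring
      have e4 : (2 * (N : ℂ) + 1 - 1) = (2 * N) := by ring
      have e5 : (2 * ((N : ℂ) + 1) + 1) = (2 * N + 3) := by ring
      have e6 : (2 * ((N : ℂ) + 1)) = (2 * N + 2) := by ring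
      rw [e1, e2, e3, e4, e5, e6]
      simp only [inv_neg]
      have p1 : b ^ (2 * N + 2 : ℤ) = b * b ^ (2 * N + 1 : ℤ) := by
        rw [← zpow_one_add₀ hb0]; congr 1; try ring
      have p2 : b ^ (2 * ((N : ℤ) + 1) + 1) = b * (b * b ^ (2 * N + 1 : ℤ)) := by
        rw [← zpow_one_add₀ hb0, ← zpow_one_add₀ hb0]; congr 1; try ring
      have p3 : b ^ (-(2 * N + 1) : ℤ) = b * b ^ (-(2 * N + 2) : ℤ) := by
        rw [← zpow_one_add₀ hb0]; congr 1; try ring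
      have p4 : b ^ (-(2 * N) : ℤ) = b * (b * b ^ (-(2 * N + 2) : ℤ)) := by
        rw [← zpow_one_add₀ hb0, ← zpow_one_add₀ hb0]; congr 1; try ring
      have p5 : b ^ (-(2 * ((N : ℤ) + 1))) = b ^ (-(2 * N + 2) : ℤ) := by congr 1
      rw [p2, p1, p4, p3, p5]
      ring
    all_goals
      simp only [Finset.mem_Icc, Finset.mem_insert]
      omega

lemma icc_tendsto : Filter.Tendsto (fun N : ℕ => Finset.Icc (-(2 * N) : ℤ) (2 * N))
    Filter.atTop Filter.atTop := by
  apply Filter.tendsto_atTop_finset_of_monotone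
  · intro a b hab z
    simp only [Finset.mem_Icc]
    omega
  · intro z
    refine ⟨z.natAbs, ?_⟩
    simp only [Finset.mem_Icc]
    omega

lemma bdry_tendsto {b : ℂ} (hb : ‖b‖ = 1) :
    Filter.Tendsto (fun N : ℕ => (- b ^ (-(2 * N) : ℤ) * (2 * N + 1 : ℂ)⁻¹
        - b ^ (2 * N + 1 : ℤ) * (2 * N : ℂ)⁻¹)) Filter.atTop (nhds 0) := by
  have h : Filter.Tendsto (fun N : ℕ => (2 : ℝ) * (N : ℝ)⁻¹) Filter.atTop (nhds 0) := by
    simpa using (tendsto_inv_atTop_nhds_zero_nat (𝕜 := ℝ)).const_mul 2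
  refine squeeze_zero_norm' ?_ h
  filter_upwards [Filter.eventually_ge_atTop 1] with N hN
  have hN' : (1 : ℝ) ≤ N := by exact_mod_cast hN
  have n1 : ‖(2 * N + 1 : ℂ)‖ = 2 * N + 1 := by
    have : (2 * N + 1 : ℂ) = ((2 * N + 1 : ℕ) : ℂ) := by push_cast; rfl
    rw [this, Complex.norm_natCast]; push_cast; rfl
  have n2 : ‖(2 * N : ℂ)‖ = 2 * N := by
    have : (2 * N : ℂ) = ((2 * N : ℕ) : ℂ) := by push_cast; rfl
    rw [this, Complex.norm_natCast]; push_cast; rfl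
  refine (norm_sub_le _ _).trans ?_
  rw [norm_mul, norm_mul, norm_neg, norm_zp hb, norm_zp hb, norm_inv, norm_inv, n1, n2]
  have a1 : (2 * (N : ℝ) + 1)⁻¹ ≤ (N : ℝ)⁻¹ := by
    apply inv_anti₀ <;> linarith
  have a2 : (2 * (N : ℝ))⁻¹ ≤ (N : ℝ)⁻¹ := by
    apply inv_anti₀ <;> linarith
  linarith

lemma D1_of {b d : ℂ} (hb : ‖b‖ = 1) (h : Filter.Tendsto (EE b) Filter.atTop (nhds d)) :
    D1 b d := by
  have hs := (D1_summable hb).hasSum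
  have h1 : Filter.Tendsto (fun N : ℕ => ∑ z ∈ Finset.Icc (-(2 * N) : ℤ) (2 * N),
      b ^ z * (((z : ℂ) - 1)⁻¹ - (z : ℂ)⁻¹)) Filter.atTop
      (nhds (∑' z : ℤ, b ^ z * (((z : ℂ) - 1)⁻¹ - (z : ℂ)⁻¹))) := by
    have hs2 := hs
    unfold HasSum at hs2
    rw [SummationFilter.unconditional_filter] at hs2
    exact hs2.comp icc_tendsto
  simp only [GG hb] at h1
  have h2 := (h.const_mul (b - 1)).add (bdry_tendsto hb)
  have := tendsto_nhds_unique h1 h2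
  unfold D1
  rw [this] at hs
  refine hs_conv hs (fun _ => rfl) (by ring)

lemma D1_one : D1 1 0 := by
  apply D1_of (by simp)
  have : EE 1 = fun _ => 0 := by
    ext N; simp [EE]
  rw [this]; exact tendsto_const_nhds

lemma D1_neg_one : D1 (-1) 0 := by
  apply D1_of (by simp)
  have : EE (-1) = fun _ => 0 := by
    ext N
    unfold EE
    apply Finset.sum_eq_zero
    intro n _
    rw [zpow_neg, zpow_neg]
    have h1 : (-1 : ℂ) ^ (2 * n + 1 : ℤ) = -1 := by
      apply Odd.neg_one_zpow; exact ⟨n, rfl⟩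
    have h2 : (-1 : ℂ) ^ (2 * n + 2 : ℤ) = 1 := by
      apply Even.neg_one_zpow; exact ⟨n + 1, by ring⟩
    rw [h1, h2]; norm_num
  rw [this]; exact tendsto_const_nhds

lemma EE_sq {b : ℂ} (hb : b ^ 2 = -1) (N : ℕ) :
    EE b N = 2 * b * ((∑ i ∈ Finset.range N, (-1 : ℝ) ^ i / (2 * i + 1) : ℝ) : ℂ) := by
  have hb0 : b ≠ 0 := by rintro rfl; norm_num at hb
  unfold EE
  push_cast
  rw [Finset.mul_sum]
  apply Finset.sum_congr rfl
  intro n _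
  have hinv : b⁻¹ = -b := by
    apply inv_eq_of_mul_eq_one_right
    linear_combination -hb
  have q : b ^ (2 * n : ℤ) = (-1) ^ n := by
    rw [zpow_mul, zpow_natCast]; congr 1
  have q1 : b ^ (2 * n + 1 : ℤ) = (-1) ^ n * b := by
    rw [zpow_add₀ hb0, q, zpow_one]
  have q2 : b ^ (2 * n + 2 : ℤ) = - (-1) ^ n := by
    rw [zpow_add₀ hb0, q]
    have : b ^ (2 : ℤ) = -1 := by exact_mod_cast hb
    rw [this]; ring
  have hh : ((-1 : ℂ) ^ n)⁻¹ = (-1) ^ n := by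
    rw [← inv_pow]; norm_num
  rw [zpow_neg, zpow_neg, q1, q2, mul_inv, inv_neg, hh, hinv]
  ring

lemma D1_sq {b : ℂ} (hn : ‖b‖ = 1) (hb : b ^ 2 = -1) : D1 b (b * π / 2) := by
  apply D1_of hn
  have h := Real.tendsto_sum_pi_div_four
  have h2 := ((Complex.continuous_ofReal.tendsto _).comp h).const_mul (2 * b)
  have e : 2 * b * ((π / 4 : ℝ) : ℂ) = b * π / 2 := by push_cast; ring
  rw [e] at h2
  refine h2.congr fun N => ?_
  rw [EE_sq hb]; rfl

lemma cc_val {b : ℂ} {x : ℝ} (hx : x ∈ Set.Icc (0 : ℝ) 1) {k : ℕ} (hk : 2 ≤ k)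
    (hb : b = Complex.exp (2 * π * Complex.I * x)) :
    cc b k = (2 * π * Complex.I) ^ k * ((-(bernoulliFun k x) / (k.factorial : ℝ) : ℝ) : ℂ) := by
  have h := (hasSum_one_div_pow_mul_fourier_mul_bernoulliFun hk hx).tsum_eq
  unfold cc
  have e : ∀ n : ℤ, b ^ n * ((n : ℂ)⁻¹) ^ k = 1 / (n : ℂ) ^ k * fourier n (x : UnitAddCircle) := by
    intro n
    rw [fourier_coe_apply, hb, ← Complex.exp_int_mul]
    rw [one_div, inv_pow, mul_comm]
    congr 2
    simp; ring
  simp only [e]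
  rw [h]
  push_cast
  ring

lemma bern_vals : bernoulli 0 = 1 ∧ bernoulli 1 = -1 / 2 ∧ bernoulli 2 = 1 / 6 ∧ bernoulli 3 = 0 ∧
    bernoulli 4 = -1 / 30 ∧ bernoulli 5 = 0 ∧ bernoulli 6 = 1 / 42 ∧ bernoulli 7 = 0 ∧
    bernoulli 8 = -1 / 30 ∧ bernoulli 9 = 0 ∧ bernoulli 10 = 5 / 66 ∧ bernoulli 11 = 0 ∧
    bernoulli 12 = -691 / 2730 := by
  have b0 := bernoulli_zero
  have b1 := bernoulli_one
  have b2 : bernoulli 2 = 1 / 6 := by rw [bernoulli_two]; norm_num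
  have b3 : bernoulli 3 = 0 := bernoulli_eq_zero_of_odd (by decide) (by norm_num)
  have b5 : bernoulli 5 = 0 := bernoulli_eq_zero_of_odd (by decide) (by norm_num)
  have b7 : bernoulli 7 = 0 := bernoulli_eq_zero_of_odd (by decide) (by norm_num)
  have b9 : bernoulli 9 = 0 := bernoulli_eq_zero_of_odd (by decide) (by norm_num)
  have b11 : bernoulli 11 = 0 := bernoulli_eq_zero_of_odd (by decide) (by norm_num)
  have b4 : bernoulli 4 = -1 / 30 := by
    have h := sum_bernoulli 5
    simp [Finset.sum_range_succ, b0, b1, b2, b3, Nat.choose] at h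
    linarith
  have b6 : bernoulli 6 = 1 / 42 := by
    have h := sum_bernoulli 7
    simp [Finset.sum_range_succ, b0, b1, b2, b3, b4, b5, Nat.choose] at h
    linarith
  have b8 : bernoulli 8 = -1 / 30 := by
    have h := sum_bernoulli 9
    simp [Finset.sum_range_succ, b0, b1, b2, b3, b4, b5, b6, b7, Nat.choose] at h
    linarith
  have b10 : bernoulli 10 = 5 / 66 := by
    have h := sum_bernoulli 11
    simp [Finset.sum_range_succ, b0, b1, b2, b3, b4, b5, b6, b7, b8, b9, Nat.choose] at h
    linarith
  have b12 : bernoulli 12 = -691 / 2730 := by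
    have h := sum_bernoulli 13
    simp [Finset.sum_range_succ, b0, b1, b2, b3, b4, b5, b6, b7, b8, b9, b10, b11, Nat.choose] at h
    linarith
  exact ⟨b0, b1, b2, b3, b4, b5, b6, b7, b8, b9, b10, b11, b12⟩

lemma bf (k : ℕ) (x : ℝ) : bernoulliFun k x =
    ∑ i ∈ Finset.range (k + 1), ((bernoulli i : ℚ) : ℝ) * (k.choose i) * x ^ (k - i) := by
  simp [bernoulliFun, Polynomial.bernoulli, Polynomial.eval_finsetSum, Polynomial.map_sum]

/-- normalised values -/
def rv (x : ℝ) (k : ℕ) : ℝ := -(bernoulliFun k x) / (k.factorial : ℝ)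

lemma rv_vals0 : rv (0 : ℝ) 2 = (-1 / 12) ∧
    rv (0 : ℝ) 3 = 0 ∧
    rv (0 : ℝ) 4 = (1 / 720) ∧
    rv (0 : ℝ) 5 = 0 ∧
    rv (0 : ℝ) 6 = (-1 / 30240) ∧
    rv (0 : ℝ) 7 = 0 ∧
    rv (0 : ℝ) 8 = (1 / 1209600) ∧
    rv (0 : ℝ) 9 = 0 ∧
    rv (0 : ℝ) 10 = (-1 / 47900160) ∧
    rv (0 : ℝ) 11 = 0 ∧
    rv (0 : ℝ) 12 = (691 / 1307674368000) := by
  obtain ⟨b0, b1, b2, b3, b4, b5, b6, b7, b8, b9, b10, b11, b12⟩ := bern_vals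
  refine ⟨?_, ?_, ?_, ?_, ?_, ?_, ?_, ?_, ?_, ?_, ?_⟩ <;>
  · unfold rv
    rw [bf]
    simp only [Finset.sum_range_succ, Finset.sum_range_zero, b0, b1, b2, b3, b4, b5, b6, b7, b8,
      b9, b10, b11, b12, Nat.choose, Nat.factorial]
    norm_num

lemma rv_vals1 : rv (1 / 4 : ℝ) 2 = (1 / 96) ∧
    rv (1 / 4 : ℝ) 3 = (-1 / 128) ∧
    rv (1 / 4 : ℝ) 4 = (-7 / 92160) ∧
    rv (1 / 4 : ℝ) 5 = (5 / 24576) ∧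
    rv (1 / 4 : ℝ) 6 = (31 / 61931520) ∧
    rv (1 / 4 : ℝ) 7 = (-61 / 11796480) ∧
    rv (1 / 4 : ℝ) 8 = (-127 / 39636172800) ∧
    rv (1 / 4 : ℝ) 9 = (277 / 2113929216) ∧
    rv (1 / 4 : ℝ) 10 = (73 / 3587639869440) ∧
    rv (1 / 4 : ℝ) 11 = (-50521 / 15220290355200) ∧
    rv (1 / 4 : ℝ) 12 = (-1414477 / 10969567664799744000) := by
  obtain ⟨b0, b1, b2, b3, b4, b5, b6, b7, b8, b9, b10, b11, b12⟩ := bern_vals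
  refine ⟨?_, ?_, ?_, ?_, ?_, ?_, ?_, ?_, ?_, ?_, ?_⟩ <;>
  · unfold rv
    rw [bf]
    simp only [Finset.sum_range_succ, Finset.sum_range_zero, b0, b1, b2, b3, b4, b5, b6, b7, b8,
      b9, b10, b11, b12, Nat.choose, Nat.factorial]
    norm_num

lemma rv_vals2 : rv (1 / 2 : ℝ) 2 = (1 / 24) ∧
    rv (1 / 2 : ℝ) 3 = 0 ∧
    rv (1 / 2 : ℝ) 4 = (-7 / 5760) ∧
    rv (1 / 2 : ℝ) 5 = 0 ∧
    rv (1 / 2 : ℝ) 6 = (31 / 967680) ∧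
    rv (1 / 2 : ℝ) 7 = 0 ∧
    rv (1 / 2 : ℝ) 8 = (-127 / 154828800) ∧
    rv (1 / 2 : ℝ) 9 = 0 ∧
    rv (1 / 2 : ℝ) 10 = (73 / 3503554560) ∧
    rv (1 / 2 : ℝ) 11 = 0 ∧
    rv (1 / 2 : ℝ) 12 = (-1414477 / 2678117105664000) := by
  obtain ⟨b0, b1, b2, b3, b4, b5, b6, b7, b8, b9, b10, b11, b12⟩ := bern_vals
  refine ⟨?_, ?_, ?_, ?_, ?_, ?_, ?_, ?_, ?_, ?_, ?_⟩ <;>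
  · unfold rv
    rw [bf]
    simp only [Finset.sum_range_succ, Finset.sum_range_zero, b0, b1, b2, b3, b4, b5, b6, b7, b8,
      b9, b10, b11, b12, Nat.choose, Nat.factorial]
    norm_num

lemma rv_vals3 : rv (3 / 4 : ℝ) 2 = (1 / 96) ∧
    rv (3 / 4 : ℝ) 3 = (1 / 128) ∧
    rv (3 / 4 : ℝ) 4 = (-7 / 92160) ∧
    rv (3 / 4 : ℝ) 5 = (-5 / 24576) ∧
    rv (3 / 4 : ℝ) 6 = (31 / 61931520) ∧
    rv (3 / 4 : ℝ) 7 = (61 / 11796480) ∧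
    rv (3 / 4 : ℝ) 8 = (-127 / 39636172800) ∧
    rv (3 / 4 : ℝ) 9 = (-277 / 2113929216) ∧
    rv (3 / 4 : ℝ) 10 = (73 / 3587639869440) ∧
    rv (3 / 4 : ℝ) 11 = (50521 / 15220290355200) ∧
    rv (3 / 4 : ℝ) 12 = (-1414477 / 10969567664799744000) := by
  obtain ⟨b0, b1, b2, b3, b4, b5, b6, b7, b8, b9, b10, b11, b12⟩ := bern_vals
  refine ⟨?_, ?_, ?_, ?_, ?_, ?_, ?_, ?_, ?_, ?_, ?_⟩ <;>
  · unfold rv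
    rw [bf]
    simp only [Finset.sum_range_succ, Finset.sum_range_zero, b0, b1, b2, b3, b4, b5, b6, b7, b8,
      b9, b10, b11, b12, Nat.choose, Nat.factorial]
    norm_num


set_option linter.unusedSimpArgs false

lemma norm_I' : ‖Complex.I‖ = 1 := Complex.norm_I
lemma norm_nI : ‖-Complex.I‖ = 1 := by simp

lemma cc_one {k : ℕ} (hk : 2 ≤ k) : cc 1 k = (2 * π * Complex.I) ^ k * ((rv 0 k : ℝ) : ℂ) :=
  cc_val (by norm_num) hk (by simp)

lemma cc_I {k : ℕ} (hk : 2 ≤ k) :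
    cc Complex.I k = (2 * π * Complex.I) ^ k * ((rv (1 / 4) k : ℝ) : ℂ) :=
  cc_val (by norm_num) hk (by
    have : (2 * π * Complex.I * ((1 / 4 : ℝ) : ℂ)) = π / 2 * Complex.I := by push_cast; ring
    rw [this, Complex.exp_pi_div_two_mul_I])

lemma cc_neg_one {k : ℕ} (hk : 2 ≤ k) :
    cc (-1) k = (2 * π * Complex.I) ^ k * ((rv (1 / 2) k : ℝ) : ℂ) :=
  cc_val (by norm_num) hk (by
    rw [← Complex.exp_pi_mul_I]; congr 1; push_cast; ring)

lemma cc_neg_I {k : ℕ} (hk : 2 ≤ k) :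
    cc (-Complex.I) k = (2 * π * Complex.I) ^ k * ((rv (3 / 4) k : ℝ) : ℂ) :=
  cc_val (by norm_num) hk (by
    have : (2 * π * Complex.I * ((3 / 4 : ℝ) : ℂ)) = π * Complex.I + π / 2 * Complex.I := by
      push_cast; ring
    rw [this, Complex.exp_add, Complex.exp_pi_mul_I, Complex.exp_pi_div_two_mul_I]; ring)

lemma SS_one : SS 1 = (2 * π * Complex.I) ^ 12 * (46 / 212837625 / 4096) := by
  have h1 : ‖(1 : ℂ)‖ = 1 := by simp
  rw [SS_eq h1 (by norm_num) D1_one]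
  simp only [mul_one]
  rw [UU4 h1 h1 D1_one (by norm_num), UU4 h1 h1 D1_one (by norm_num),
    UU4 h1 h1 D1_one (by norm_num), UU5 h1 h1 D1_one (by norm_num)]
  obtain ⟨v2, v3, v4, v5, v6, v7, v8, v9, v10, v11, v12⟩ := rv_vals0
  simp (discharger := norm_num) only [mul_one, cc_one, Nat.reduceAdd, v2, v3, v4, v5, v6, v7, v8, v9, v10, v11, v12]
  push_cast
  ring

lemma SS_neg_one : SS (-1) = (2 * π * Complex.I) ^ 12 * (4523 / 27243216000 / 4096) := by
  have h1 : ‖(1 : ℂ)‖ = 1 := by simp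
  have h2 : ‖(-1 : ℂ)‖ = 1 := by simp
  have hm : (-1 : ℂ) * (-1) = 1 := by norm_num
  rw [SS_eq h2 (by norm_num) D1_neg_one, hm]
  rw [UU4 h2 h2 D1_neg_one (by norm_num), UU4 h2 h2 D1_neg_one (by norm_num),
    UU4 h1 h2 D1_neg_one (by norm_num), UU5 h1 h2 D1_neg_one (by norm_num)]
  obtain ⟨v2, v3, v4, v5, v6, v7, v8, v9, v10, v11, v12⟩ := rv_vals0
  obtain ⟨w2, w3, w4, w5, w6, w7, w8, w9, w10, w11, w12⟩ := rv_vals2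
  simp (discharger := norm_num) only [hm, one_mul, cc_one, cc_neg_one, Nat.reduceAdd,
    v2, v3, v4, v5, v6, v7, v8, v9, v10, v11, v12, w2, w3, w4, w5, w6, w7, w8, w9, w10, w11, w12]
  push_cast
  ring

lemma SS_I : SS Complex.I = (2 * π * Complex.I) ^ 12 * (-19329337 / 111588212736000 / 4096) := by
  have h1 : ‖(-1 : ℂ)‖ = 1 := by simp
  have h2 := norm_I'
  have hm : Complex.I * Complex.I = -1 := Complex.I_mul_I
  have hm2 : -1 * Complex.I = -Complex.I := by ring
  have hD := D1_sq norm_I' Complex.I_sq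
  have hd : Complex.I * π / 2 = (2 * π * Complex.I) * (1 / 4) := by ring
  rw [hd] at hD
  rw [SS_eq h2 Complex.I_pow_four hD, hm]
  rw [UU4 h2 h2 hD (by norm_num), UU4 h2 h2 hD (by norm_num),
    UU4 h1 h2 hD (by norm_num), UU5 h1 h2 hD (by norm_num)]
  obtain ⟨v2, v3, v4, v5, v6, v7, v8, v9, v10, v11, v12⟩ := rv_vals1
  obtain ⟨w2, w3, w4, w5, w6, w7, w8, w9, w10, w11, w12⟩ := rv_vals2
  obtain ⟨u2, u3, u4, u5, u6, u7, u8, u9, u10, u11, u12⟩ := rv_vals3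
  simp (discharger := norm_num) only [hm, hm2, cc_I, cc_neg_I, cc_neg_one, Nat.reduceAdd,
    v2, v3, v4, v5, v6, v7, v8, v9, v10, v11, v12, w2, w3, w4, w5, w6, w7, w8, w9, w10, w11, w12,
    u2, u3, u4, u5, u6, u7, u8, u9, u10, u11, u12]
  generalize (2 * π * Complex.I : ℂ) = s
  push_cast
  ring

lemma SS_nI : SS (-Complex.I) =
    (2 * π * Complex.I) ^ 12 * (-19329337 / 111588212736000 / 4096) := by
  have h1 : ‖(-1 : ℂ)‖ = 1 := by simp
  have h2 := norm_nI
  have hm : -Complex.I * -Complex.I = -1 := by rw [neg_mul_neg]; exact Complex.I_mul_I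
  have hm2 : -1 * -Complex.I = Complex.I := by ring
  have hD := D1_sq norm_nI (by rw [neg_sq]; exact Complex.I_sq)
  have hd : -Complex.I * π / 2 = (2 * π * Complex.I) * (-1 / 4) := by ring
  rw [hd] at hD
  have h4 : (-Complex.I) ^ 4 = 1 := by
    rw [neg_pow, Complex.I_pow_four]; norm_num
  rw [SS_eq h2 h4 hD, hm]
  rw [UU4 h2 h2 hD (by norm_num), UU4 h2 h2 hD (by norm_num),
    UU4 h1 h2 hD (by norm_num), UU5 h1 h2 hD (by norm_num)]
  obtain ⟨v2, v3, v4, v5, v6, v7, v8, v9, v10, v11, v12⟩ := rv_vals1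
  obtain ⟨w2, w3, w4, w5, w6, w7, w8, w9, w10, w11, w12⟩ := rv_vals2
  obtain ⟨u2, u3, u4, u5, u6, u7, u8, u9, u10, u11, u12⟩ := rv_vals3
  simp (discharger := norm_num) only [hm, hm2, cc_I, cc_neg_I, cc_neg_one, Nat.reduceAdd,
    v2, v3, v4, v5, v6, v7, v8, v9, v10, v11, v12, w2, w3, w4, w5, w6, w7, w8, w9, w10, w11, w12,
    u2, u3, u4, u5, u6, u7, u8, u9, u10, u11, u12]
  generalize (2 * π * Complex.I : ℂ) = s
  push_cast
  ring

/-- weight -/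
def WW (t : (ℤ × ℤ) × ℤ) : ℂ :=
  (t.1.1 : ℂ)⁻¹ ^ 2 * (t.1.2 : ℂ)⁻¹ ^ 2 * (t.2 : ℂ)⁻¹ ^ 2 *
    ((t.1.1 : ℂ) - t.1.2)⁻¹ ^ 2 * ((t.1.1 : ℂ) - t.2)⁻¹ ^ 2 * ((t.1.2 : ℂ) - t.2)⁻¹ ^ 2

def gg (t : (ℤ × ℤ) × ℤ) : ℂ := if (t.1.1 + t.1.2 + t.2) % 4 = 2 then WW t else 0

lemma char_sum (n : ℤ) : (1 : ℂ) ^ n - Complex.I ^ n + (-1) ^ n - (-Complex.I) ^ n =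
    if n % 4 = 2 then 4 else 0 := by
  have h4 : (-Complex.I) ^ 4 = 1 := by
    rw [neg_pow, Complex.I_pow_four]; norm_num
  have e : n = n % 4 + 4 * (n / 4) := by omega
  rw [zp4 (a := Complex.I) norm_I' Complex.I_pow_four e, zp4 norm_nI h4 e,
    zp4 (a := -1) (by simp) (by norm_num) e, one_zpow]
  have hr : n % 4 = 0 ∨ n % 4 = 1 ∨ n % 4 = 2 ∨ n % 4 = 3 := by omega
  have hI2 : Complex.I ^ (2 : ℤ) = -1 := by exact_mod_cast Complex.I_sq
  have hI2' : (-Complex.I) ^ (2 : ℤ) = -1 := by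
    have : (-Complex.I) ^ 2 = -1 := by rw [neg_sq]; exact Complex.I_sq
    exact_mod_cast this
  have hI3 : Complex.I ^ (3 : ℤ) = -Complex.I := by exact_mod_cast Complex.I_pow_three
  have hI3' : (-Complex.I) ^ (3 : ℤ) = Complex.I := by
    have : (-Complex.I) ^ 3 = Complex.I := by rw [neg_pow, Complex.I_pow_three]; norm_num
    exact_mod_cast this
  have hm2 : (-1 : ℂ) ^ (2 : ℤ) = 1 := by norm_num
  have hm3 : (-1 : ℂ) ^ (3 : ℤ) = -1 := by
    have : (-1 : ℂ) ^ 3 = -1 := by norm_num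
    exact_mod_cast this
  rcases hr with h | h | h | h <;> rw [h]
  · simp
  · simp; ring
  · rw [hI2, hI2', hm2]; norm_num
  · rw [hI3, hI3', hm3]; norm_num

lemma gg_eq (t : (ℤ × ℤ) × ℤ) : gg t =
    (1 / 4) * (sf 1 t - sf Complex.I t + sf (-1) t - sf (-Complex.I) t) := by
  have h := char_sum (t.1.1 + t.1.2 + t.2)
  have : (1 / 4) * (sf 1 t - sf Complex.I t + sf (-1) t - sf (-Complex.I) t) =
      (1 / 4) * ((1 : ℂ) ^ (t.1.1 + t.1.2 + t.2) - Complex.I ^ (t.1.1 + t.1.2 + t.2) +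
        (-1) ^ (t.1.1 + t.1.2 + t.2) - (-Complex.I) ^ (t.1.1 + t.1.2 + t.2)) * WW t := by
    simp only [sf, WW]; ring
  rw [this, h]
  unfold gg
  split_ifs <;> ring

lemma hasSum_gg : HasSum gg ((2 * π) ^ 12 * (24 * 1103 / 145332633600 / 4096)) := by
  have h := ((((summable_sf (a := 1) (by simp)).hasSum.sub (summable_sf norm_I').hasSum).add
    (summable_sf (a := -1) (by simp)).hasSum).sub (summable_sf norm_nI).hasSum).mul_left (1 / 4)
  refine hs_conv h gg_eq ?_
  change _ = 1 / 4 * (SS 1 - SS Complex.I + SS (-1) - SS (-Complex.I))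
  have hI : Complex.I ^ 12 = 1 := by
    rw [show 12 = 4 * 3 from rfl, pow_mul, Complex.I_pow_four]; simp
  rw [SS_one, SS_I, SS_neg_one, SS_nI, mul_pow _ Complex.I, hI]
  ring

lemma gg_ne {t : (ℤ × ℤ) × ℤ} (h : gg t ≠ 0) : t.1.1 ≠ 0 ∧ t.1.2 ≠ 0 ∧ t.2 ≠ 0 ∧
    t.1.1 ≠ t.1.2 ∧ t.1.1 ≠ t.2 ∧ t.1.2 ≠ t.2 := by
  refine ⟨?_, ?_, ?_, ?_, ?_, ?_⟩ <;> intro h' <;> apply h <;> simp [gg, WW, h']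

def SA (A : (ℤ × ℤ) × ℤ → Prop) : ℂ := ∑' t, Set.indicator {t | A t} gg t

lemma ind_pos {A : (ℤ × ℤ) × ℤ → Prop} {t} (h : A t) : Set.indicator {t | A t} gg t = gg t :=
  Set.indicator_of_mem (s := {t | A t}) h gg

lemma ind_neg {A : (ℤ × ℤ) × ℤ → Prop} {t} (h : ¬ A t) : Set.indicator {t | A t} gg t = 0 :=
  Set.indicator_of_notMem (s := {t | A t}) h gg

lemma SA_add (A B C : (ℤ × ℤ) × ℤ → Prop)
    (h : ∀ x y z : ℤ, x ≠ 0 → y ≠ 0 → z ≠ 0 → x ≠ y → x ≠ z → y ≠ z →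
      (A ((x, y), z) ↔ (B ((x, y), z) ∨ C ((x, y), z))) ∧ ¬ (B ((x, y), z) ∧ C ((x, y), z))) :
    SA A = SA B + SA C := by
  unfold SA
  rw [← (hasSum_gg.summable.indicator _).tsum_add (hasSum_gg.summable.indicator _)]
  congr 1
  ext t
  by_cases h0 : gg t = 0
  · have key : ∀ D : (ℤ × ℤ) × ℤ → Prop, Set.indicator {t | D t} gg t = 0 := by
      intro D
      by_cases hD : D t
      · rw [ind_pos hD, h0]
      · exact ind_neg hD
    rw [key, key, key, add_zero]
  · obtain ⟨h1, h2, h3, h4, h5, h6⟩ := gg_ne h0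
    obtain ⟨hA, hB⟩ := h t.1.1 t.1.2 t.2 h1 h2 h3 h4 h5 h6
    change (A t ↔ (B t ∨ C t)) at hA
    change ¬ (B t ∧ C t) at hB
    by_cases hb : B t
    · have hc : ¬ C t := fun hc => hB ⟨hb, hc⟩
      rw [ind_pos (hA.2 (Or.inl hb)), ind_pos hb, ind_neg hc, add_zero]
    · by_cases hc : C t
      · rw [ind_pos (hA.2 (Or.inr hc)), ind_neg hb, ind_pos hc, zero_add]
      · have ha : ¬ A t := fun ha => (hA.1 ha).elim hb hc
        rw [ind_neg ha, ind_neg hb, ind_neg hc, zero_add]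

lemma SA_equiv (e : (ℤ × ℤ) × ℤ ≃ (ℤ × ℤ) × ℤ) (hg : ∀ t, gg (e t) = gg t)
    (A B : (ℤ × ℤ) × ℤ → Prop) (hAB : ∀ t, B t ↔ A (e t)) : SA B = SA A := by
  unfold SA
  rw [← e.tsum_eq (fun t => Set.indicator {t | A t} gg t)]
  congr 1
  ext t
  by_cases h : B t
  · rw [ind_pos h, ind_pos ((hAB t).1 h), hg]
  · rw [ind_neg h, ind_neg (fun h' => h ((hAB t).2 h'))]

lemma gg_congr {s t : (ℤ × ℤ) × ℤ} (k : ℤ) (h1 : s.1.1 + s.1.2 + s.2 = t.1.1 + t.1.2 + t.2 + 4 * k)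
    (h2 : WW s = WW t) : gg s = gg t := by
  unfold gg
  have : ((s.1.1 + s.1.2 + s.2) % 4 = 2) ↔ ((t.1.1 + t.1.2 + t.2) % 4 = 2) := by omega
  simp only [this, h2]

lemma inv_sub_sq (a b : ℂ) : (a - b)⁻¹ ^ 2 = (b - a)⁻¹ ^ 2 := by
  rw [← neg_sub b a, inv_neg]; ring

/-- swap of the first two coordinates -/
def s1 : (ℤ × ℤ) × ℤ ≃ (ℤ × ℤ) × ℤ where
  toFun t := ((t.1.2, t.1.1), t.2)
  invFun t := ((t.1.2, t.1.1), t.2)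
  left_inv t := by simp
  right_inv t := by simp

def s2 : (ℤ × ℤ) × ℤ ≃ (ℤ × ℤ) × ℤ where
  toFun t := ((t.1.1, t.2), t.1.2)
  invFun t := ((t.1.1, t.2), t.1.2)
  left_inv t := by simp
  right_inv t := by simp

/-- exchange of the base point with the first point -/
def s3 : (ℤ × ℤ) × ℤ ≃ (ℤ × ℤ) × ℤ where
  toFun t := ((-t.1.1, t.1.2 - t.1.1), t.2 - t.1.1)
  invFun t := ((-t.1.1, t.1.2 - t.1.1), t.2 - t.1.1)
  left_inv t := by simp
  right_inv t := by simp

lemma gg_s1 (t) : gg (s1 t) = gg t := by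
  refine gg_congr 0 (by simp [s1]; ring) ?_
  simp only [WW, s1, Equiv.coe_fn_mk]
  rw [inv_sub_sq (t.1.2 : ℂ) t.1.1]; ring

lemma gg_s2 (t) : gg (s2 t) = gg t := by
  refine gg_congr 0 (by simp [s2]; ring) ?_
  simp only [WW, s2, Equiv.coe_fn_mk]
  rw [inv_sub_sq (t.2 : ℂ) t.1.2]; ring

lemma gg_s3 (t) : gg (s3 t) = gg t := by
  refine gg_congr (-t.1.1) (by simp [s3]; ring) ?_
  simp only [WW, s3, Equiv.coe_fn_mk]
  push_cast
  have h1 : (-(t.1.1 : ℂ) - (t.1.2 - t.1.1)) = -t.1.2 := by ring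
  have h2 : (-(t.1.1 : ℂ) - (t.2 - t.1.1)) = -t.2 := by ring
  have h3 : ((t.1.2 : ℂ) - t.1.1 - (t.2 - t.1.1)) = t.1.2 - t.2 := by ring
  rw [h1, h2, h3, inv_sub_sq (t.1.2 : ℂ) t.1.1, inv_sub_sq (t.2 : ℂ) t.1.1]
  simp only [inv_neg]
  ring

lemma chamber : SA (fun _ => True) =
    24 * SA (fun t => 0 < t.1.1 ∧ t.1.1 < t.1.2 ∧ t.1.2 < t.2) := by
  -- ordering the three points
  have a1 := SA_add (fun _ => True) (fun t => t.1.1 < t.1.2) (fun t => t.1.2 < t.1.1)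
    (by intros; dsimp only; refine ⟨⟨fun _ => ?_, fun _ => ?_⟩, ?_⟩ <;> first | trivial | omega)
  have a2 := SA_equiv s1 gg_s1 (fun t => t.1.1 < t.1.2) (fun t => t.1.2 < t.1.1)
    (by intro t; simp [s1])
  have a3 := SA_add (fun t => t.1.1 < t.1.2) (fun t => t.1.1 < t.1.2 ∧ t.1.2 < t.2)
    (fun t => t.1.1 < t.1.2 ∧ t.2 < t.1.2) (by intros; dsimp only; refine ⟨⟨fun _ => ?_, fun _ => ?_⟩, ?_⟩ <;> first | trivial | omega)
  have a4 := SA_add (fun t => t.1.1 < t.1.2 ∧ t.2 < t.1.2) (fun t => t.1.1 < t.2 ∧ t.2 < t.1.2)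
    (fun t => t.2 < t.1.1 ∧ t.1.1 < t.1.2) (by intros; dsimp only; refine ⟨⟨fun _ => ?_, fun _ => ?_⟩, ?_⟩ <;> first | trivial | omega)
  have a5 := SA_equiv s2 gg_s2 (fun t => t.1.1 < t.1.2 ∧ t.1.2 < t.2)
    (fun t => t.1.1 < t.2 ∧ t.2 < t.1.2) (by intro t; simp [s2])
  have a6 := SA_equiv s1 gg_s1 (fun t => t.1.1 < t.1.2 ∧ t.1.2 < t.2)
    (fun t => t.1.2 < t.1.1 ∧ t.1.1 < t.2) (by intro t; simp [s1])
  have a7 := SA_equiv s2 gg_s2 (fun t => t.1.2 < t.1.1 ∧ t.1.1 < t.2)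
    (fun t => t.2 < t.1.1 ∧ t.1.1 < t.1.2) (by intro t; simp [s2])
  -- position of the base point
  have b1 := SA_add (fun t => t.1.1 < t.1.2 ∧ t.1.2 < t.2)
    (fun t => 0 < t.1.1 ∧ t.1.1 < t.1.2 ∧ t.1.2 < t.2)
    (fun t => t.1.1 < 0 ∧ t.1.1 < t.1.2 ∧ t.1.2 < t.2) (by intros; dsimp only; refine ⟨⟨fun _ => ?_, fun _ => ?_⟩, ?_⟩ <;> first | trivial | omega)
  have b2 := SA_add (fun t => t.1.1 < 0 ∧ t.1.1 < t.1.2 ∧ t.1.2 < t.2)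
    (fun t => t.1.1 < 0 ∧ 0 < t.1.2 ∧ t.1.2 < t.2)
    (fun t => t.1.1 < t.1.2 ∧ t.1.2 < 0 ∧ t.1.2 < t.2) (by intros; dsimp only; refine ⟨⟨fun _ => ?_, fun _ => ?_⟩, ?_⟩ <;> first | trivial | omega)
  have b3 := SA_add (fun t => t.1.1 < t.1.2 ∧ t.1.2 < 0 ∧ t.1.2 < t.2)
    (fun t => t.1.1 < t.1.2 ∧ t.1.2 < 0 ∧ 0 < t.2)
    (fun t => t.1.1 < t.1.2 ∧ t.1.2 < t.2 ∧ t.2 < 0) (by intros; dsimp only; refine ⟨⟨fun _ => ?_, fun _ => ?_⟩, ?_⟩ <;> first | trivial | omega)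
  have c1 := SA_equiv s3 gg_s3 (fun t => 0 < t.1.1 ∧ t.1.1 < t.1.2 ∧ t.1.2 < t.2)
    (fun t => t.1.1 < 0 ∧ 0 < t.1.2 ∧ t.1.2 < t.2)
    (by intro t; simp only [s3, Equiv.coe_fn_mk]; omega)
  have c2 := SA_equiv s1 gg_s1 (fun t => 0 < t.1.1 ∧ t.1.1 < t.1.2 ∧ t.1.2 < t.2)
    (fun t => 0 < t.1.2 ∧ t.1.2 < t.1.1 ∧ t.1.1 < t.2)
    (by intro t; simp only [s1, Equiv.coe_fn_mk])
  have c3 := SA_equiv s3 gg_s3 (fun t => 0 < t.1.2 ∧ t.1.2 < t.1.1 ∧ t.1.1 < t.2)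
    (fun t => t.1.1 < t.1.2 ∧ t.1.2 < 0 ∧ 0 < t.2)
    (by intro t; simp only [s3, Equiv.coe_fn_mk]; omega)
  have c4 := SA_equiv s2 gg_s2 (fun t => 0 < t.1.1 ∧ t.1.1 < t.1.2 ∧ t.1.2 < t.2)
    (fun t => 0 < t.1.1 ∧ t.1.1 < t.2 ∧ t.2 < t.1.2)
    (by intro t; simp only [s2, Equiv.coe_fn_mk])
  have c5 := SA_equiv s1 gg_s1 (fun t => 0 < t.1.1 ∧ t.1.1 < t.2 ∧ t.2 < t.1.2)
    (fun t => 0 < t.1.2 ∧ t.1.2 < t.2 ∧ t.2 < t.1.1)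
    (by intro t; simp only [s1, Equiv.coe_fn_mk])
  have c6 := SA_equiv s3 gg_s3 (fun t => 0 < t.1.2 ∧ t.1.2 < t.2 ∧ t.2 < t.1.1)
    (fun t => t.1.1 < t.1.2 ∧ t.1.2 < t.2 ∧ t.2 < 0)
    (by intro t; simp only [s3, Equiv.coe_fn_mk]; omega)
  rw [a1, a2, a3, a4, a5, a7, a6, b1, b2, b3, c1, c3, c2, c6, c5, c4]
  ring

/-- parametrisation of the chamber -/
def iota (t : ℕ × ℕ × ℕ) : (ℤ × ℤ) × ℤ :=
  (((t.2.2 + 1 : ℤ), (t.2.2 + 1 + (t.2.1 + 1) : ℤ)), (t.2.2 + 1 + (t.2.1 + 1) + (t.1 + 1) : ℤ))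

lemma iota_inj : Function.Injective iota := by
  rintro ⟨l, m, n⟩ ⟨l', m', n'⟩ h
  simp only [iota, Prod.mk.injEq] at h ⊢
  omega

lemma SA_chamber : SA (fun t => 0 < t.1.1 ∧ t.1.1 < t.1.2 ∧ t.1.2 < t.2) =
    ∑' t, gg (iota t) := by
  unfold SA
  rw [← iota_inj.tsum_eq]
  · congr 1
    ext t
    rw [Set.indicator_of_mem]
    simp only [iota, Set.mem_ofPred_eq]
    omega
  · intro t ht
    have ht' := Set.mem_of_indicator_ne_zero ht
    obtain ⟨⟨x, y⟩, z⟩ := t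
    simp only [Set.mem_ofPred_eq] at ht'
    refine ⟨((z - y - 1).toNat, (y - x - 1).toNat, (x - 1).toNat), ?_⟩
    simp only [iota, Prod.mk.injEq]
    omega

end PU4

theorem PU4_value_two :
    (∑' t : ℕ × ℕ × ℕ,
        if ((t.1 + 1) + 2 * (t.2.1 + 1) + 3 * (t.2.2 + 1)) % 4 = 2 then
          (1 : ℝ) /
            (((t.1 + 1 : ℕ) : ℝ) ^ 2 * ((t.2.1 + 1 : ℕ) : ℝ) ^ 2 *
              ((t.2.2 + 1 : ℕ) : ℝ) ^ 2 * ((t.1 + 1 + (t.2.1 + 1) : ℕ) : ℝ) ^ 2 *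
              ((t.2.1 + 1 + (t.2.2 + 1) : ℕ) : ℝ) ^ 2 *
              ((t.1 + 1 + (t.2.1 + 1) + (t.2.2 + 1) : ℕ) : ℝ) ^ 2)
        else 0) = 1103 * π ^ 12 / 145332633600 := by
  have h1 : SA (fun _ => True) = (2 * π) ^ 12 * (24 * 1103 / 145332633600 / 4096) := by
    unfold SA
    simp only [Set.ofPred_true, Set.indicator_univ]
    exact hasSum_gg.tsum_eq
  rw [chamber, SA_chamber] at h1
  have h2 : ∑' t, gg (iota t) = ((1103 * π ^ 12 / 145332633600 : ℝ) : ℂ) := by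
    push_cast
    linear_combination h1 / 24
  apply Complex.ofReal_injective
  rw [← h2, Complex.ofReal_tsum]
  congr 1
  ext ⟨l, m, n⟩
  have hc : ((l + 1) + 2 * (m + 1) + 3 * (n + 1)) % 4 = 2 ↔
      ((n + 1 : ℤ) + (n + 1 + (m + 1)) + (n + 1 + (m + 1) + (l + 1))) % 4 = 2 := by omega
  by_cases hcc : ((n + 1 : ℤ) + (n + 1 + (m + 1)) + (n + 1 + (m + 1) + (l + 1))) % 4 = 2
  · have hg : gg (iota (l, m, n)) = WW (iota (l, m, n)) := if_pos hcc
    rw [hg, if_pos (hc.2 hcc)]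
    simp only [WW, iota]
    push_cast
    have d1 : ((n : ℂ) + 1 - (n + 1 + (m + 1))) = -(m + 1) := by ring
    have d2 : ((n : ℂ) + 1 - (n + 1 + (m + 1) + (l + 1))) = -(l + 1 + (m + 1)) := by ring
    have d3 : ((n : ℂ) + 1 + (m + 1) - (n + 1 + (m + 1) + (l + 1))) = -(l + 1) := by ring
    have d4 : ((n : ℂ) + 1 + (m + 1)) = m + 1 + (n + 1) := by ring
    have d5 : ((m : ℂ) + 1 + (n + 1) + (l + 1)) = l + 1 + (m + 1) + (n + 1) := by ring
    rw [d1, d2, d3, d4, d5]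
    simp only [inv_neg, one_div, mul_inv, inv_pow, neg_sq]
    ring
  · have hg : gg (iota (l, m, n)) = 0 := if_neg hcc
    rw [hg, if_neg (fun h => hcc (hc.1 h))]; simp
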